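/- Let t ≥ 0 and n = 42t + 21. The edge set of the complete graph K_n can be partitioned into 3t+1 K_{7,7,7}-factors and one K₇-factor; that is, (K_n; K_{7,7,7}^{3t+1}, K₇) exists. -/

import Mathlib

open SimpleGraph

/-- `F` is an `H`-factor (of the complete graph on its vertex type, or of any graph
containing it): every connected component of `F`, viewed as an induced subgraph,
is isomorphic to `H`.  Since `F` is a graph on all of `V`, it is automatically spanning. -/
def IsHFactor {V W : Type*} (H : SimpleGraph W) (F : SimpleGraph V) : Prop :=
  ∀ c : F.ConnectedComponent, Nonempty (F.induce c.supp ≃g H)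

/-- A `C_k`-factor: a spanning subgraph each of whose connected components is a
cycle of length `k` (in particular it is 2-regular). -/
def IsCycleFactor {V : Type*} (k : ℕ) (F : SimpleGraph V) : Prop :=
  IsHFactor (SimpleGraph.cycleGraph k) F

/-- `(G; C_m^r, C_k^s)`: a partition of the edge set of `G` into `r` `C_m`-factors
and `s` `C_k`-factors. -/
def IsCycleDecomp {V : Type*} (G : SimpleGraph V) (m k r s : ℕ) : Prop :=
  ∃ F : Fin r ⊕ Fin s → SimpleGraph V,
    (∀ i, F i ≤ G) ∧
    (∀ e ∈ G.edgeSet, ∃! i, e ∈ (F i).edgeSet) ∧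
    (∀ i : Fin r, IsCycleFactor m (F (Sum.inl i))) ∧
    (∀ j : Fin s, IsCycleFactor k (F (Sum.inr j)))

/-- The complete tripartite graph `K_{7,7,7}` on vertex set `Z₇ × Z₃`, with the three
partite sets `V_i = Z₇ × {i}` for `i ∈ Z₃` (the vertex `j_i` is the pair `(j, i)`). -/
def K777 : SimpleGraph (ZMod 7 × ZMod 3) where
  Adj x y := x.2 ≠ y.2
  symm := ⟨fun _ _ h => h.symm⟩
  loopless := ⟨fun _ h => h rfl⟩

/-- The edge set `E_{ij}(d) = {{l_i, (l+d)_j} : l ∈ Z₇}`. -/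
def Eij (i j : ZMod 3) (d : ZMod 7) : Set (Sym2 (ZMod 7 × ZMod 3)) :=
  {e | ∃ l : ZMod 7, e = s((l, i), (l + d, j))}

/-- A partition of the edge set of `G` into `a` `H₁`-factors and `b` `H₂`-factors,
denoted `(G; H₁^a, H₂^b)`. -/
def IsFactorDecomp {V W₁ W₂ : Type*} (G : SimpleGraph V)
    (H₁ : SimpleGraph W₁) (H₂ : SimpleGraph W₂) (a b : ℕ) : Prop :=
  ∃ F : Fin a ⊕ Fin b → SimpleGraph V,
    (∀ i, F i ≤ G) ∧
    (∀ e ∈ G.edgeSet, ∃! i, e ∈ (F i).edgeSet) ∧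
    (∀ i : Fin a, IsHFactor H₁ (F (Sum.inl i))) ∧
    (∀ j : Fin b, IsHFactor H₂ (F (Sum.inr j)))

/-!
Blow up each point of a Kirkman triple system on `6t + 3` points to seven points: the triples of a
parallel class become disjoint copies of `K_{7,7,7}`, which gives `3t + 1` factors, and the pairs
over a common point form the `K₇`-factor.

A Kirkman triple system on `2r + 1` points is, after deleting a point, the same as a Kirkman frame
of type `2 ^ r`: triples, together with `r` groups of size two, such that the triples fall into
classes each missing exactly one group. The set of such `r` is closed under pairwise balanced
designs (Wilson), contains every prime power `q ≡ 1 mod 6` (a starter over `𝔽_q`), and with `r`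
also contains `3r + 1`. A transversal design with five groups of size `m`, one of them truncated to
size `h ≤ m`, has blocks of sizes four and five; giving each point weight three turns these into
blocks of size four. Hence `3m + 1` and `3h + 1` yield `3(4m + h) + 1`, and induction leaves a few
small values of `r ≡ 1 mod 3`.
-/

/-! ### Kirkman triple systems -/

/-- A Kirkman triple system on the points `P` with parallel classes indexed by `C`. The class `x`
consists of the triples `{p, σ x p, σ x (σ x p)}`. Only the existence of a triple through two given
points is required: the cardinality condition then forces the triple to be unique and rules out
fixed points of `σ x`. -/
structure IsKirkman {C P : Type*} (σ : C → P → P) : Prop where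
  card_eq : Nat.card P = 2 * Nat.card C + 1
  cube : ∀ x p, σ x (σ x (σ x p)) = p
  cover : ∀ p q, p ≠ q → ∃ x, σ x p = q ∨ σ x q = p

namespace IsKirkman

variable {C P : Type*} {σ : C → P → P}

/-- The two other points of the triple of the class `x` containing `p`, as a function of `x` and
a Boolean that tells them apart. -/
def mate (σ : C → P → P) (p : P) : C × Bool → P
  | (x, false) => σ x p
  | (x, true) => σ x (σ x p)

theorem finite_points (h : IsKirkman σ) : Finite P :=
  Nat.finite_of_card_ne_zero (by simp [h.card_eq])

theorem compl_singleton_subset_range_mate (h : IsKirkman σ) (p : P) :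
    {p}ᶜ ⊆ Set.range (mate σ p) := by
  intro q hq
  obtain ⟨x, hx | hx⟩ := h.cover p q (Ne.symm hq)
  · exact ⟨(x, false), hx⟩
  · exact ⟨(x, true), by rw [mate, ← hx, h.cube]⟩

theorem card_prod_bool (h : IsKirkman σ) (p : P) :
    Nat.card (C × Bool) = ({p}ᶜ : Set P).ncard := by
  have := h.finite_points
  rw [Set.ncard_compl, h.card_eq, Nat.card_prod]
  simp [mul_comm]

variable [Finite C]

theorem range_mate (h : IsKirkman σ) (p : P) : Set.range (mate σ p) = {p}ᶜ := by
  have := h.finite_points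
  refine (Set.eq_of_subset_of_ncard_le (h.compl_singleton_subset_range_mate p) ?_).symm
  rw [← h.card_prod_bool, ← Set.image_univ, ← Set.ncard_univ]
  exact Set.ncard_image_le

theorem mate_injective (h : IsKirkman σ) (p : P) : Function.Injective (mate σ p) := by
  refine Set.injOn_univ.1 (Set.injOn_of_ncard_image_eq ?_)
  rw [Set.image_univ, h.range_mate, ← h.card_prod_bool, Set.ncard_univ]

theorem mate_ne (h : IsKirkman σ) (p : P) (c : C × Bool) : mate σ p c ≠ p :=
  (h.range_mate p).subset ⟨c, rfl⟩

theorem apply_ne (h : IsKirkman σ) (x : C) (p : P) : σ x p ≠ p :=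
  h.mate_ne p (x, false)

theorem class_unique (h : IsKirkman σ) {p q : P} {x y : C} (hx : σ x p = q ∨ σ x q = p)
    (hy : σ y p = q ∨ σ y q = p) : x = y := by
  have key : ∀ z, σ z p = q ∨ σ z q = p → ∃ b, mate σ p (z, b) = q := by
    rintro z (hz | hz)
    · exact ⟨false, hz⟩
    · exact ⟨true, by rw [mate, ← hz, h.cube]⟩
  obtain ⟨b, hb⟩ := key x hx
  obtain ⟨c, hc⟩ := key y hy
  exact congrArg Prod.fst (h.mate_injective p (hb.trans hc.symm))

end IsKirkman

/-! ### Kirkman frames -/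

/-- A Kirkman frame of type `2 ^ |s|` with groups `{x} × Bool`, `x ∈ s`: the triples
`{p, σ x p, σ x (σ x p)}` with `p.1 ≠ x` partition the points outside the group of `x`, and every
two points in different groups lie in one of the triples. As for `IsKirkman`, uniqueness of that
triple is automatic. The values of `σ` outside `s` are irrelevant. -/
structure IsFrameOn {V : Type*} (s : Set V) (σ : V → V × Bool → V × Bool) : Prop where
  mapsTo : ∀ x ∈ s, ∀ p, p.1 ∈ s → (σ x p).1 ∈ s
  cube : ∀ x ∈ s, ∀ p, p.1 ∈ s → σ x (σ x (σ x p)) = p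
  fixed : ∀ x ∈ s, ∀ b, σ x (x, b) = (x, b)
  cover : ∀ p q, p.1 ∈ s → q.1 ∈ s → p.1 ≠ q.1 → ∃ x ∈ s, σ x p = q ∨ σ x q = p

/-- There is a Kirkman frame of type `2 ^ r`, equivalently a Kirkman triple system on `2r + 1`
points. -/
def HasFrame (r : ℕ) : Prop :=
  ∃ σ : ℕ → ℕ × Bool → ℕ × Bool, IsFrameOn (Set.Iio r) σ

namespace IsFrameOn

variable {V W : Type*} {s : Set V} {t : Set W} {σ : V → V × Bool → V × Bool}

theorem empty (σ : V → V × Bool → V × Bool) : IsFrameOn ∅ σ := by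
  constructor <;> simp

theorem transport (h : IsFrameOn s σ) {f : V → W} {g : W → V} (hf : Set.MapsTo f s t)
    (hg : Set.MapsTo g t s) (hfg : Set.InvOn g f s t) :
    IsFrameOn t fun y q => Prod.map f id (σ (g y) (Prod.map g id q)) where
  mapsTo y hy q hq := hf (h.mapsTo _ (hg hy) _ (hg hq))
  cube y hy q hq := by
    have lift : ∀ p : V × Bool, p.1 ∈ s → Prod.map g id (Prod.map f id p) = p :=
      fun p hp => Prod.ext (hfg.1 hp) rfl
    have h₁ := h.mapsTo _ (hg hy) (Prod.map g id q) (hg hq)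
    rw [lift _ h₁, lift _ (h.mapsTo _ (hg hy) _ h₁), h.cube _ (hg hy) _ (hg hq)]
    exact Prod.ext (hfg.2 hq) rfl
  fixed y hy b := by
    simp only [Prod.map_apply, id, h.fixed _ (hg hy), hfg.2 hy]
  cover p q hp hq hpq := by
    have back : ∀ p : W × Bool, p.1 ∈ t → Prod.map f id (Prod.map g id p) = p :=
      fun p hp => Prod.ext (hfg.2 hp) rfl
    obtain ⟨x, hx, h₁⟩ := h.cover (Prod.map g id p) (Prod.map g id q) (hg hp) (hg hq)
      (hfg.2.injOn.ne hp hq hpq)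
    refine ⟨f x, hf hx, h₁.imp (fun h₁ => ?_) fun h₁ => ?_⟩
    · rw [hfg.1 hx, h₁, back q hq]
    · rw [hfg.1 hx, h₁, back p hp]

theorem exists_of_encard_eq [Nonempty V] [Nonempty W] (hs : s.Finite)
    (hst : s.encard = t.encard) (h : IsFrameOn s σ) : ∃ τ, IsFrameOn t τ := by
  obtain ⟨f, hf⟩ := hs.exists_bijOn_of_encard_eq hst
  exact ⟨_, h.transport hf.mapsTo (hf.surjOn.mapsTo_invFunOn) hf.invOn_invFunOn⟩

end IsFrameOn

theorem hasFrame_ncard_iff {V : Type*} [Finite V] {s : Set V} :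
    HasFrame s.ncard ↔ ∃ σ, IsFrameOn s σ := by
  rcases s.eq_empty_or_nonempty with rfl | ⟨v, -⟩
  · simpa [HasFrame] using
      iff_of_true ⟨fun _ => id, IsFrameOn.empty _⟩ ⟨fun _ => id, IsFrameOn.empty _⟩
  have : Nonempty V := ⟨v⟩
  have hs : (Set.Iio s.ncard).encard = s.encard := by
    rw [← s.toFinite.cast_ncard_eq, ← (Set.finite_Iio s.ncard).cast_ncard_eq,
      Set.ncard_eq_toFinset_card']
    simp
  exact ⟨fun ⟨_, h⟩ => h.exists_of_encard_eq (Set.finite_Iio _) hs,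
    fun ⟨_, h⟩ => h.exists_of_encard_eq s.toFinite hs.symm⟩

theorem hasFrame_card_iff {V : Type*} [Finite V] :
    HasFrame (Nat.card V) ↔ ∃ σ, IsFrameOn (Set.univ : Set V) σ := by
  rw [← Set.ncard_univ, hasFrame_ncard_iff]

namespace IsKirkman

variable {C P : Type*} {σ : C → P → P}

/-- The triple of the class `x` containing `o`. -/
def triple (σ : C → P → P) (o : P) (x : C) : Set P :=
  insert o (Set.range fun b => mate σ o (x, b))

theorem mapsTo_triple (h : IsKirkman σ) (o : P) (x : C) :
    Set.MapsTo (σ x) (triple σ o x) (triple σ o x) := by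
  rintro _ (rfl | ⟨_ | _, rfl⟩)
  · exact Or.inr ⟨false, rfl⟩
  · exact Or.inr ⟨true, rfl⟩
  · exact Or.inl (h.cube x o)

theorem mate_mem_triple_iff [Finite C] (h : IsKirkman σ) (o : P) (x : C) (c : C × Bool) :
    mate σ o c ∈ triple σ o x ↔ c.1 = x := by
  constructor
  · rintro (hc | ⟨b, hb⟩)
    · exact absurd hc (h.mate_ne o c)
    · exact congrArg Prod.fst (h.mate_injective o hb).symm
  · rintro rfl
    exact Or.inr ⟨c.2, rfl⟩

/-- The triples through `o` become the groups, all other triples are kept. -/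
theorem exists_deletePoint [Finite C] (h : IsKirkman σ) (o : P) (x : C) (c : C × Bool) :
    ∃ d : C × Bool, (c.1 = x → d = c) ∧
      (c.1 ≠ x → d.1 ≠ x ∧ mate σ o d = σ x (mate σ o c)) := by
  by_cases hc : c.1 = x
  · exact ⟨c, fun _ => rfl, absurd hc⟩
  have hσ : σ x (mate σ o c) ∉ triple σ o x := fun hmem =>
    hc ((h.mate_mem_triple_iff o x c).1
      (h.cube x (mate σ o c) ▸ h.mapsTo_triple o x (h.mapsTo_triple o x hmem)))
  obtain ⟨d, hd⟩ := (h.range_mate o).superset fun ho => hσ (Or.inl ho)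
  rw [← hd, h.mate_mem_triple_iff] at hσ
  exact ⟨d, fun hc' => absurd hc' hc, fun _ => ⟨hσ, hd⟩⟩

theorem hasFrame [Finite C] (h : IsKirkman σ) : HasFrame (Nat.card C) := by
  obtain ⟨o⟩ : Nonempty P := (Nat.card_pos_iff.1 (by simp [h.card_eq])).1
  choose τ fixed hτ using h.exists_deletePoint o
  refine hasFrame_card_iff.2 ⟨τ, fun _ _ _ _ => trivial, fun x _ c _ => ?_,
    fun x _ b => fixed x _ rfl, fun c d _ _ hcd => ?_⟩
  · by_cases hc : c.1 = x
    · simp only [fixed x c hc]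
    · obtain ⟨h₁, e₁⟩ := hτ x c hc
      obtain ⟨h₂, e₂⟩ := hτ x _ h₁
      obtain ⟨-, e₃⟩ := hτ x _ h₂
      exact h.mate_injective o (by rw [e₃, e₂, e₁, h.cube])
  · have outside : ∀ {x c d}, c.1 ≠ d.1 → σ x (mate σ o c) = mate σ o d → τ x c = d := by
      intro x c d hcd hσ
      have hc : c.1 ≠ x := fun hc => hcd <| hc.trans
        ((h.mate_mem_triple_iff o x d).1
          (hσ ▸ h.mapsTo_triple o x ((h.mate_mem_triple_iff o x c).2 hc))).symm
      exact h.mate_injective o ((hτ x c hc).2.trans hσ)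
    obtain ⟨x, hx⟩ := h.cover _ _ ((h.mate_injective o).ne fun heq => hcd (congrArg Prod.fst heq))
    exact ⟨x, trivial, hx.imp (outside hcd) (outside hcd.symm)⟩

end IsKirkman

namespace IsFrameOn

variable {V : Type*} {σ : V → V × Bool → V × Bool}

theorem apply_of_fst_eq {s : Set V} (h : IsFrameOn s σ) {x : V} (hx : x ∈ s) {p : V × Bool}
    (hp : p.1 = x) : σ x p = p := by
  obtain ⟨y, b⟩ := p
  obtain rfl : y = x := hp
  exact h.fixed y hx b

theorem fst_ne {s : Set V} (h : IsFrameOn s σ) {x : V} (hx : x ∈ s) {p : V × Bool}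
    (hp : p.1 ∈ s) (hpx : p.1 ≠ x) : (σ x p).1 ≠ x := by
  intro hσ
  have fix := h.apply_of_fst_eq hx hσ
  have cube := h.cube x hx p hp
  rw [fix, fix] at cube
  exact hpx (cube ▸ hσ)

open Classical in
/-- The class `x` of the Kirkman triple system obtained from a frame by adding a point `none` and
the triples consisting of `none` and a group. -/
noncomputable def addPoint (σ : V → V × Bool → V × Bool) (x : V) :
    Option (V × Bool) → Option (V × Bool)
  | none => some (x, false)
  | some p => if p.1 = x then bif p.2 then none else some (x, true) else some (σ x p)

theorem addPoint_some_of_ne {s : Set V} (h : IsFrameOn s σ) {x : V} (hx : x ∈ s)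
    {p q : V × Bool} (hpq : p.1 ≠ q.1) (hσ : σ x p = q) :
    addPoint σ x (some p) = some q := by
  have hp : p.1 ≠ x := fun hp => hpq (congrArg Prod.fst ((h.apply_of_fst_eq hx hp).symm.trans hσ))
  rw [addPoint, if_neg hp, hσ]

theorem addPoint_cube (h : IsFrameOn Set.univ σ) (x : V) (p : Option (V × Bool)) :
    addPoint σ x (addPoint σ x (addPoint σ x p)) = p := by
  rcases p with _ | ⟨y, b⟩
  · simp [addPoint]
  by_cases hy : y = x
  · cases b <;> simp [addPoint, hy]
  · have h₁ := h.fst_ne (x := x) (p := (y, b)) trivial trivial hy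
    have h₂ := h.fst_ne (x := x) trivial trivial h₁
    simp only [addPoint, hy, h₁, h₂, if_false, h.cube x trivial (y, b) trivial]

theorem isKirkman_addPoint [Finite V] (h : IsFrameOn Set.univ σ) : IsKirkman (addPoint σ) where
  card_eq := by simp [Finite.card_option, mul_comm]
  cube := h.addPoint_cube
  cover := by
    rintro (_ | ⟨y, b⟩) (_ | ⟨z, c⟩) hpq
    · exact absurd rfl hpq
    · exact ⟨z, by cases c <;> simp [addPoint]⟩
    · exact ⟨y, by cases b <;> simp [addPoint]⟩
    by_cases hyz : y = z
    · subst hyz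
      exact ⟨y, by cases b <;> cases c <;> simp_all [addPoint]⟩
    · obtain ⟨x, hx, hσ⟩ := h.cover (y, b) (z, c) trivial trivial hyz
      exact ⟨x, hσ.imp (h.addPoint_some_of_ne hx hyz)
        (h.addPoint_some_of_ne hx (Ne.symm hyz))⟩

end IsFrameOn

/-! ### Gluing frames along group divisible designs -/

/-- A group divisible design on the point set `s` with groups the fibres of `g` and set of
blocks `𝓑`. A pairwise balanced design is the case `g = id`. -/
structure IsGDDOn {V ι : Type*} (s : Set V) (g : V → ι) (𝓑 : Set (Set V)) : Prop where
  subset : ∀ B ∈ 𝓑, B ⊆ s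
  injOn : ∀ B ∈ 𝓑, Set.InjOn g B
  existsUnique : ∀ a ∈ s, ∀ b ∈ s, g a ≠ g b → ∃! B, B ∈ 𝓑 ∧ a ∈ B ∧ b ∈ B

namespace IsGDDOn

variable {V W ι κ : Type*} {s : Set V} {g : V → ι} {𝓑 : Set (Set V)}

theorem block_unique (h : IsGDDOn s g 𝓑) {a b : V} (hab : g a ≠ g b) {B B' : Set V}
    (hB : B ∈ 𝓑) (ha : a ∈ B) (hb : b ∈ B) (hB' : B' ∈ 𝓑) (ha' : a ∈ B') (hb' : b ∈ B') :
    B = B' :=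
  (h.existsUnique a (h.subset B hB ha) b (h.subset B hB hb) hab).unique
    ⟨hB, ha, hb⟩ ⟨hB', ha', hb'⟩

theorem exists_gluing (h : IsGDDOn s id 𝓑) (τ : Set V → V → V × Bool → V × Bool)
    (hτ : ∀ B ∈ 𝓑, ∀ x ∈ B, ∀ b, τ B x (x, b) = (x, b)) :
    ∃ σ : V → V × Bool → V × Bool, (∀ x b, σ x (x, b) = (x, b)) ∧
      ∀ B ∈ 𝓑, ∀ x ∈ B, ∀ p, p.1 ∈ B → σ x p = τ B x p := by
  classical
  choose! L hL using fun x (hx : x ∈ s) a (ha : a ∈ s) (hxa : x ≠ a) =>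
    (h.existsUnique x hx a ha hxa).exists
  refine ⟨fun x p => if p.1 = x then p else τ (L x p.1) x p, fun x b => if_pos rfl,
    fun B hB x hx ⟨a, b⟩ ha => ?_⟩
  dsimp only at ha ⊢
  split_ifs with hax
  · rw [hax, hτ B hB x hx]
  · obtain ⟨h₁, h₂, h₃⟩ := hL x (h.subset B hB hx) a (h.subset B hB ha) (Ne.symm hax)
    rw [h.block_unique (Ne.symm hax) h₁ h₂ h₃ hB hx ha]

/-- Wilson's closure property for pairwise balanced designs. -/
theorem hasFrame_ncard [Finite V] (h : IsGDDOn s id 𝓑) (h𝓑 : ∀ B ∈ 𝓑, HasFrame B.ncard) :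
    HasFrame s.ncard := by
  have : Nonempty (V → V × Bool → V × Bool) := ⟨fun _ => id⟩
  choose! τ hτ using fun B hB => hasFrame_ncard_iff.1 (h𝓑 B hB)
  obtain ⟨σ, fixed, hσ⟩ := h.exists_gluing τ fun B hB => (hτ B hB).fixed
  have block : ∀ x ∈ s, ∀ a ∈ s, x ≠ a → ∃ B ∈ 𝓑, x ∈ B ∧ a ∈ B := fun x hx a ha hxa =>
    (h.existsUnique x hx a ha hxa).exists
  refine hasFrame_ncard_iff.2 ⟨σ, ?_, ?_, fun x _ => fixed x, ?_⟩
  · rintro x hx ⟨a, b⟩ ha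
    obtain rfl | hxa := eq_or_ne x a
    · rwa [fixed]
    · obtain ⟨B, hB, hxB, haB⟩ := block x hx a ha hxa
      rw [hσ B hB x hxB _ haB]
      exact h.subset B hB ((hτ B hB).mapsTo x hxB _ haB)
  · rintro x hx ⟨a, b⟩ ha
    obtain rfl | hxa := eq_or_ne x a
    · simp only [fixed]
    · obtain ⟨B, hB, hxB, haB⟩ := block x hx a ha hxa
      have h₁ := (hτ B hB).mapsTo x hxB (a, b) haB
      have h₂ := (hτ B hB).mapsTo x hxB _ h₁
      rw [hσ B hB x hxB (a, b) haB, hσ B hB x hxB _ h₁, hσ B hB x hxB _ h₂,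
        (hτ B hB).cube x hxB _ haB]
  · rintro p q hp hq hpq
    obtain ⟨B, hB, hpB, hqB⟩ := block _ hp _ hq hpq
    obtain ⟨x, hx, hpqx⟩ := (hτ B hB).cover p q hpB hqB hpq
    refine ⟨x, h.subset B hB hx, ?_⟩
    rwa [hσ B hB x hx p hpB, hσ B hB x hx q hqB]

theorem adjoinPoint (h : IsGDDOn s g 𝓑) :
    IsGDDOn (insert none (some '' s)) id
      (Set.image some '' 𝓑 ∪ Set.range fun i => insert none (some '' (s ∩ g ⁻¹' {i}))) where
  subset := by
    rintro _ (⟨B, hB, rfl⟩ | ⟨i, rfl⟩)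
    · exact (Set.image_mono (h.subset B hB)).trans (Set.subset_insert _ _)
    · exact Set.insert_subset_insert (Set.image_mono Set.inter_subset_left)
  injOn _ _ := Set.injOn_id _
  existsUnique := by
    have group : ∀ b ∈ s, ∀ B ∈ Set.image some '' 𝓑 ∪
        Set.range fun i => insert none (some '' (s ∩ g ⁻¹' {i})), none ∈ B → some b ∈ B →
        B = insert none (some '' (s ∩ g ⁻¹' {g b})) := by
      rintro b hb _ (⟨B, -, rfl⟩ | ⟨i, rfl⟩) h₁ h₂
      · simp at h₁
      · simp_all
    rintro _ (rfl | ⟨a, ha, rfl⟩) _ (rfl | ⟨b, hb, rfl⟩) hab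
    · exact absurd rfl hab
    · exact ⟨_, ⟨Or.inr ⟨g b, rfl⟩, by simp, by simp [hb]⟩,
        fun B hB => group b hb B hB.1 hB.2.1 hB.2.2⟩
    · exact ⟨_, ⟨Or.inr ⟨g a, rfl⟩, by simp [ha], by simp⟩,
        fun B hB => group a ha B hB.1 hB.2.2 hB.2.1⟩
    by_cases hg : g a = g b
    · refine ⟨_, ⟨Or.inr ⟨g a, rfl⟩, by simp [ha], by simp [hb, hg]⟩, ?_⟩
      rintro _ ⟨⟨B, hB, rfl⟩ | ⟨i, rfl⟩, h₁, h₂⟩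
      · simp only [Set.mem_image, Option.some.injEq, exists_eq_right] at h₁ h₂
        exact absurd (congrArg some (h.injOn B hB h₁ h₂ hg)) hab
      · simp_all
    · obtain ⟨B, ⟨hB, haB, hbB⟩, -⟩ := h.existsUnique a ha b hb hg
      refine ⟨some '' B, ⟨Or.inl ⟨B, hB, rfl⟩, ⟨a, haB, rfl⟩, ⟨b, hbB, rfl⟩⟩, ?_⟩
      rintro _ ⟨⟨B', hB', rfl⟩ | ⟨i, rfl⟩, h₁, h₂⟩
      · simp only [Set.mem_image, Option.some.injEq, exists_eq_right] at h₁ h₂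
        rw [h.block_unique hg hB haB hbB hB' h₁ h₂]
      · simp_all

theorem hasFrame_ncard_add_one [Finite V] (h : IsGDDOn s g 𝓑)
    (h𝓑 : ∀ B ∈ 𝓑, HasFrame B.ncard) (hg : ∀ i, HasFrame ((s ∩ g ⁻¹' {i}).ncard + 1)) :
    HasFrame (s.ncard + 1) := by
  have ncard_insert : ∀ t : Set V, (insert none (some '' t)).ncard = t.ncard + 1 := fun t => by
    rw [Set.ncard_insert_of_notMem (by simp),
      Set.ncard_image_of_injective _ (Option.some_injective V)]
  rw [← ncard_insert]
  refine h.adjoinPoint.hasFrame_ncard ?_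
  rintro _ (⟨B, hB, rfl⟩ | ⟨i, rfl⟩)
  · rw [Set.ncard_image_of_injective _ (Option.some_injective V)]
    exact h𝓑 B hB
  · rw [ncard_insert]
    exact hg i

theorem image (h : IsGDDOn s g 𝓑) {f : V → W} (hf : Set.InjOn f s) {k : W → κ}
    (hk : ∀ a ∈ s, ∀ b ∈ s, k (f a) = k (f b) ↔ g a = g b) :
    IsGDDOn (f '' s) k (Set.image f '' 𝓑) where
  subset := by
    rintro _ ⟨B, hB, rfl⟩
    exact Set.image_mono (h.subset B hB)
  injOn := by
    rintro _ ⟨B, hB, rfl⟩ _ ⟨a, ha, rfl⟩ _ ⟨b, hb, rfl⟩ hab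
    have hs := h.subset B hB
    rw [h.injOn B hB ha hb ((hk a (hs ha) b (hs hb)).1 hab)]
  existsUnique := by
    rintro _ ⟨a, ha, rfl⟩ _ ⟨b, hb, rfl⟩ hab
    rw [Ne, hk a ha b hb] at hab
    obtain ⟨B, ⟨hB, haB, hbB⟩, -⟩ := h.existsUnique a ha b hb hab
    refine ⟨f '' B, ⟨⟨B, hB, rfl⟩, ⟨a, haB, rfl⟩, ⟨b, hbB, rfl⟩⟩, ?_⟩
    rintro _ ⟨⟨B', hB', rfl⟩, ha', hb'⟩
    rw [hf.mem_image_iff (h.subset B' hB') ha] at ha'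
    rw [hf.mem_image_iff (h.subset B' hB') hb] at hb'
    rw [h.block_unique hab hB haB hbB hB' ha' hb']

theorem inter (h : IsGDDOn s g 𝓑) (t : Set V) : IsGDDOn (s ∩ t) g ((· ∩ t) '' 𝓑) where
  subset := by
    rintro _ ⟨B, hB, rfl⟩
    exact Set.inter_subset_inter_left t (h.subset B hB)
  injOn := by
    rintro _ ⟨B, hB, rfl⟩
    exact (h.injOn B hB).mono Set.inter_subset_left
  existsUnique := by
    rintro a ⟨ha, hat⟩ b ⟨hb, hbt⟩ hab
    obtain ⟨B, ⟨hB, haB, hbB⟩, -⟩ := h.existsUnique a ha b hb hab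
    refine ⟨B ∩ t, ⟨⟨B, hB, rfl⟩, ⟨haB, hat⟩, ⟨hbB, hbt⟩⟩, ?_⟩
    rintro _ ⟨⟨B', hB', rfl⟩, ha', hb'⟩
    rw [h.block_unique hab hB haB hbB hB' ha'.1 hb'.1]

theorem inflate (h : IsGDDOn s g 𝓑) {𝓓 : Set V → Set (Set (V × W))}
    (h𝓓 : ∀ B ∈ 𝓑, IsGDDOn (B ×ˢ Set.univ) Prod.fst (𝓓 B)) :
    IsGDDOn (s ×ˢ (Set.univ : Set W)) (g ∘ Prod.fst) (⋃ B ∈ 𝓑, 𝓓 B) where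
  subset D hD := by
    obtain ⟨B, hB, hDB⟩ := Set.mem_iUnion₂.1 hD
    exact ((h𝓓 B hB).subset D hDB).trans (Set.prod_mono_left (h.subset B hB))
  injOn D hD p hp q hq hpq := by
    obtain ⟨B, hB, hDB⟩ := Set.mem_iUnion₂.1 hD
    have hs := (h𝓓 B hB).subset D hDB
    exact (h𝓓 B hB).injOn D hDB hp hq (h.injOn B hB (hs hp).1 (hs hq).1 hpq)
  existsUnique p hp q hq hpq := by
    obtain ⟨B, ⟨hB, hpB, hqB⟩, -⟩ := h.existsUnique _ hp.1 _ hq.1 hpq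
    have hpq' : p.1 ≠ q.1 := fun heq => hpq (congrArg g heq)
    obtain ⟨D, ⟨hD, hpD, hqD⟩, -⟩ :=
      (h𝓓 B hB).existsUnique p ⟨hpB, trivial⟩ q ⟨hqB, trivial⟩ hpq'
    refine ⟨D, ⟨Set.mem_biUnion hB hD, hpD, hqD⟩, ?_⟩
    rintro D' ⟨hD', hpD', hqD'⟩
    obtain ⟨B', hB', hDB'⟩ := Set.mem_iUnion₂.1 hD'
    have hs := (h𝓓 B' hB').subset D' hDB'
    obtain rfl := h.block_unique hpq hB' (hs hpD').1 (hs hqD').1 hB hpB hqB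
    exact (h𝓓 B' hB').block_unique hpq' hDB' hpD' hqD' hD hpD hqD

end IsGDDOn

/-! ### Transversal designs and difference families -/

/-- Two coordinates of a row of an orthogonal array determine the row, so the graphs of the rows
are the blocks of a transversal design. -/
theorem isGDDOn_graphOn {I K R : Type*} {L : K → I → R}
    (hL : ∀ i j, i ≠ j → ∀ x y, ∃! k, L k i = x ∧ L k j = y) :
    IsGDDOn Set.univ (Prod.fst : I × R → I) (Set.range fun k => Set.univ.graphOn (L k)) where
  subset _ _ := Set.subset_univ _
  injOn := by
    rintro _ ⟨k, rfl⟩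
    exact Set.fst_injOn_graph
  existsUnique := by
    rintro ⟨i, x⟩ - ⟨j, y⟩ - hij
    obtain ⟨k, hk, unique⟩ := hL i j hij x y
    refine ⟨_, ⟨⟨k, rfl⟩, by simpa using hk.1, by simpa using hk.2⟩, ?_⟩
    rintro _ ⟨⟨k', rfl⟩, h₁, h₂⟩
    rw [unique k' ⟨by simpa using h₁, by simpa using h₂⟩]

/-- The lines `i ↦ c + d * a i` over a commutative ring, with the slope `d` as an additional
coordinate. -/
def affineRow {R I : Type*} [CommRing R] (a : I → R) (k : R × R) (o : Option I) : R :=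
  o.elim k.2 fun i => k.1 + k.2 * a i

theorem affineRow_existsUnique {R I : Type*} [CommRing R] {a : I → R}
    (ha : ∀ i j, i ≠ j → IsUnit (a i - a j)) (i j : Option I) (hij : i ≠ j) (x y : R) :
    ∃! k, affineRow a k i = x ∧ affineRow a k j = y := by
  rcases i with _ | i <;> rcases j with _ | j
  · exact absurd rfl hij
  · refine ⟨(y - x * a j, x), ⟨rfl, sub_add_cancel _ _⟩, ?_⟩
    rintro ⟨c, d⟩ ⟨rfl, rfl⟩
    simp [affineRow]
  · refine ⟨(x - y * a i, y), ⟨sub_add_cancel _ _, rfl⟩, ?_⟩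
    rintro ⟨c, d⟩ ⟨rfl, rfl⟩
    simp [affineRow]
  · obtain ⟨u, hu⟩ := (ha i j fun h => hij (congrArg some h)).exists_right_inv
    refine ⟨(x - (x - y) * u * a i, (x - y) * u), ⟨?_, ?_⟩, ?_⟩
    · simp [affineRow]
    · simp only [affineRow, Option.elim_some]
      linear_combination (y - x) * hu
    · rintro ⟨c, d⟩ ⟨rfl, rfl⟩
      simp only [affineRow, Option.elim_some, Prod.mk.injEq]
      exact ⟨by linear_combination (d * a i) * hu, by linear_combination -d * hu⟩

theorem isGDDOn_range_translates {G H J K : Type*} [AddCommGroup G] [AddCommGroup H] (g : G →+ H)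
    {D : J → K → G} (inj : ∀ j, Function.Injective (g ∘ D j))
    (diff : ∀ d, g d ≠ 0 → ∃! x : J × K × K, D x.1 x.2.1 - D x.1 x.2.2 = d) :
    IsGDDOn Set.univ g (Set.range fun x : J × G => Set.range fun k => x.2 + D x.1 k) where
  subset _ _ := Set.subset_univ _
  injOn := by
    rintro _ ⟨⟨j, c⟩, rfl⟩ _ ⟨k, rfl⟩ _ ⟨l, rfl⟩ hkl
    have : g (D j k) = g (D j l) := by simpa using hkl
    rw [inj j this]
  existsUnique := by
    rintro a - b - hab
    obtain ⟨⟨j, k, l⟩, hjkl, unique⟩ := diff (a - b) (by rwa [map_sub, sub_ne_zero])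
    refine ⟨_, ⟨⟨(j, a - D j k), rfl⟩, ⟨k, sub_add_cancel _ _⟩, ⟨l, ?_⟩⟩, ?_⟩
    · change a - D j k + D j l = b
      rw [← sub_sub_self a b, ← hjkl]
      abel
    · rintro _ ⟨⟨⟨j', c⟩, rfl⟩, ⟨k', hk⟩, ⟨l', hl⟩⟩
      dsimp only at hk hl hjkl
      cases unique (j', k', l') (by simp only [← hk, ← hl]; abel)
      rw [← hk, add_sub_cancel_right]

/-- The line through `a` of direction `i`, a coset of the subgroup `N i`, extended by the point
at infinity `Sum.inr i` of that direction. -/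
def extendedLine {G ι : Type*} [AddCommGroup G] (N : ι → AddSubgroup G) (a : G) (i : ι) :
    Set (G ⊕ ι) :=
  insert (Sum.inr i) (Sum.inl '' {b | b - a ∈ N i})

section ExtendedLine

variable {G ι : Type*} [AddCommGroup G] {N : ι → AddSubgroup G} {a b : G} {i j : ι}

@[simp]
theorem inl_mem_extendedLine : Sum.inl b ∈ extendedLine N a i ↔ b - a ∈ N i := by
  simp [extendedLine]

@[simp]
theorem inr_mem_extendedLine : Sum.inr j ∈ extendedLine N a i ↔ j = i := by
  simp [extendedLine]

theorem extendedLine_eq (h : b - a ∈ N i) : extendedLine N a i = extendedLine N b i := by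
  ext (c | j)
  · rw [inl_mem_extendedLine, inl_mem_extendedLine, ← sub_add_sub_cancel c b a,
      add_mem_cancel_right h]
  · simp

theorem ncard_extendedLine [Finite G] (N : ι → AddSubgroup G) (a : G) (i : ι) :
    (extendedLine N a i).ncard = Nat.card (N i) + 1 := by
  rw [extendedLine, Set.ncard_insert_of_notMem (by simp),
    Set.ncard_image_of_injective _ Sum.inl_injective]
  congr 1
  exact Nat.card_congr ((Equiv.subRight a).subtypeEquiv fun _ => Iff.rfl)

variable {K : Type*} {D : K → G}

/-- The blocks of a pairwise balanced design on `G ⊕ ι`: the translates of `D`, the extended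
lines, and the line at infinity. -/
def completedBlocks (D : K → G) (N : ι → AddSubgroup G) : Set (Set (G ⊕ ι)) :=
  Set.range (fun c => Set.range fun k => Sum.inl (c + D k)) ∪
    Set.range (fun x : G × ι => extendedLine N x.1 x.2) ∪ {Set.range Sum.inr}

/-- The block through `Sum.inl a` and `Sum.inl b` when `x` represents `a - b` either as a
difference of `D` or as an element of one of the subgroups `N i`. -/
def joiningBlock (D : K → G) (N : ι → AddSubgroup G) (a : G) : (K × K) ⊕ ι → Set (G ⊕ ι)
  | Sum.inl k => Set.range fun l => Sum.inl (a - D k.1 + D l)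
  | Sum.inr i => extendedLine N a i

theorem exists_eq_joiningBlock {B : Set (G ⊕ ι)} (hB : B ∈ completedBlocks D N)
    (ha : Sum.inl a ∈ B) (hb : Sum.inl b ∈ B) :
    ∃ x : (K × K) ⊕ ι, x.elim (fun k => D k.1 - D k.2 = a - b) (fun i => a - b ∈ N i) ∧
      B = joiningBlock D N a x := by
  obtain (⟨c, rfl⟩ | ⟨⟨c, i⟩, rfl⟩) | rfl := hB
  · obtain ⟨k, hk⟩ := ha
    obtain ⟨l, hl⟩ := hb
    obtain rfl := Sum.inl_injective hk
    obtain rfl := Sum.inl_injective hl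
    exact ⟨Sum.inl (k, l), by simp, by simp [joiningBlock]⟩
  · rw [inl_mem_extendedLine] at ha hb
    exact ⟨Sum.inr i, by simpa using sub_mem ha hb, extendedLine_eq ha⟩
  · simp at ha

theorem existsUnique_completedBlocks_inl_inl {x : (K × K) ⊕ ι}
    (hx : x.elim (fun k => D k.1 - D k.2 = a - b) (fun i => a - b ∈ N i))
    (unique : ∀ y : (K × K) ⊕ ι,
      y.elim (fun k => D k.1 - D k.2 = a - b) (fun i => a - b ∈ N i) → y = x) :
    ∃! B, B ∈ completedBlocks D N ∧ Sum.inl a ∈ B ∧ Sum.inl b ∈ B := by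
  refine ⟨joiningBlock D N a x, ?_, ?_⟩
  · rcases x with ⟨k, l⟩ | i
    · refine ⟨Or.inl (Or.inl ⟨_, rfl⟩), ⟨k, by simp⟩, ⟨l, congrArg Sum.inl ?_⟩⟩
      rw [sub_add, show D k - D l = a - b from hx, sub_sub_cancel]
    · refine ⟨Or.inl (Or.inr ⟨(a, i), rfl⟩), by simp [joiningBlock], ?_⟩
      simpa [joiningBlock] using neg_mem (show a - b ∈ N i from hx)
  · rintro B ⟨hB, ha, hb⟩
    obtain ⟨y, hy, rfl⟩ := exists_eq_joiningBlock hB ha hb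
    rw [unique y hy]

theorem existsUnique_completedBlocks_inl_inr (D : K → G) (N : ι → AddSubgroup G) (a : G) (i : ι) :
    ∃! B, B ∈ completedBlocks D N ∧ Sum.inl a ∈ B ∧ Sum.inr i ∈ B := by
  refine ⟨_, ⟨Or.inl (Or.inr ⟨(a, i), rfl⟩), by simp, by simp⟩, ?_⟩
  rintro _ ⟨(⟨c, rfl⟩ | ⟨⟨c, j⟩, rfl⟩) | rfl, h₁, h₂⟩
  · simp at h₂
  · obtain rfl := inr_mem_extendedLine.1 h₂
    exact extendedLine_eq (inl_mem_extendedLine.1 h₁)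
  · simp at h₁

theorem isGDDOn_completedBlocks
    (diff : ∀ d ≠ 0, ∃! x : (K × K) ⊕ ι,
      x.elim (fun k => D k.1 - D k.2 = d) (fun i => d ∈ N i)) :
    IsGDDOn Set.univ id (completedBlocks D N) where
  subset _ _ := Set.subset_univ _
  injOn _ _ := Set.injOn_id _
  existsUnique := by
    rintro (a | i) - (b | j) - hab
    · obtain ⟨x, hx, unique⟩ := diff (a - b) (sub_ne_zero.2 fun h => hab (congrArg Sum.inl h))
      exact existsUnique_completedBlocks_inl_inl hx unique
    · exact existsUnique_completedBlocks_inl_inr D N a j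
    · simpa only [and_comm] using existsUnique_completedBlocks_inl_inr D N b i
    · refine ⟨_, ⟨Or.inr rfl, ⟨i, rfl⟩, ⟨j, rfl⟩⟩, ?_⟩
      rintro _ ⟨(⟨c, rfl⟩ | ⟨⟨c, k⟩, rfl⟩) | rfl, h₁, h₂⟩
      · simp at h₁
      · simp_all
      · rfl

end ExtendedLine

/-! ### The frame of type `2 ^ q` over a field of order `q ≡ 1 mod 6` -/

/-- `τ` moves `(h, b)` to `(h + d, c)`, or conversely, for some `h`: the mixed difference `d`
from level `b` to level `c` occurs in the triples of `τ`. -/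
def HasMixedDiff {G : Type*} [AddCommGroup G] (τ : G × Bool → G × Bool) (b c : Bool) (d : G) :
    Prop :=
  (∃ h, τ (h, b) = (h + d, c)) ∨ ∃ h, τ (h, c) = (h - d, b)

theorem hasMixedDiff_neg_iff {G : Type*} [AddCommGroup G] {τ : G × Bool → G × Bool} {b c : Bool}
    {d : G} : HasMixedDiff τ c b (-d) ↔ HasMixedDiff τ b c d := by
  simp only [HasMixedDiff, sub_neg_eq_add, ← sub_eq_add_neg, or_comm]

theorem hasFrame_of_hasMixedDiff {G : Type*} [AddCommGroup G] [Finite G] (τ : G × Bool → G × Bool)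
    (zero : ∀ b, τ (0, b) = (0, b)) (cube : ∀ p, τ (τ (τ p)) = p)
    (diff : ∀ b c, ∀ d ≠ 0, HasMixedDiff τ b c d) : HasFrame (Nat.card G) := by
  refine hasFrame_card_iff.2 ⟨fun z p => ((τ (p.1 - z, p.2)).1 + z, (τ (p.1 - z, p.2)).2),
    fun _ _ _ _ => trivial, fun z _ p _ => ?_, fun z _ b => ?_, fun ⟨x, b⟩ ⟨y, c⟩ _ _ hxy => ?_⟩
  · simp [cube]
  · simp [zero]
  · obtain ⟨h, hτ⟩ | ⟨h, hτ⟩ := diff b c (y - x) (sub_ne_zero.2 hxy.symm)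
    · have hy : h + (y - x) + (x - h) = y := by abel
      exact ⟨x - h, trivial, Or.inl (by simp [hτ, hy])⟩
    · exact ⟨y - h, trivial, Or.inr (by simp [hτ])⟩

/-- A set of representatives of the pairs `{h, -h}`, `h ≠ 0`, that is closed under multiplication
by `ω`. -/
structure IsHalfSystem {F : Type*} [Field F] (ω : F) (H : Set F) : Prop where
  zero_notMem : 0 ∉ H
  mul_mem_iff : ∀ h, ω * h ∈ H ↔ h ∈ H
  neg_mem_iff : ∀ h ≠ 0, -h ∈ H ↔ h ∉ H

open Classical in
/-- Let `ω` be a primitive cube root of unity, `H` a half system for `ω` and `κ = (1 - ω) / 2`.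
This permutation traverses the triples `{(h, false), (-ω h, false), (κ h, true)}` with `h ∈ H` and
`{(κ h, true), (κ ω h, true), (κ ω² h, true)}` with `h ∉ H` in this order. -/
noncomputable def starter {F : Type*} [Field F] (ω κ : F) (H : Set F) : F × Bool → F × Bool
  | (d, false) => if -d ∈ H then (-(ω ^ 2 * κ * d), true) else (-(ω * d), false)
  | (d, true) => if d / κ ∈ H then (d / κ, false) else (ω * d, true)

section Starter

variable {F : Type*} [Field F] {ω κ : F} {H : Set F}

theorem IsHalfSystem.neg_notMem (hH : IsHalfSystem ω H) {h : F} (hh : h ∈ H) : -h ∉ H :=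
  fun hn => (hH.neg_mem_iff h fun h0 => hH.zero_notMem (h0 ▸ hh)).1 hn hh

theorem IsHalfSystem.mem_of_neg_notMem (hH : IsHalfSystem ω H) {h : F} (h0 : h ≠ 0)
    (hh : -h ∉ H) : h ∈ H :=
  of_not_not ((hH.neg_mem_iff h h0).not.1 hh)

theorem starter_mul_true_of_mem (hκ : κ ≠ 0) {h : F} (hh : h ∈ H) :
    starter ω κ H (κ * h, true) = (h, false) := by
  rw [starter, mul_div_cancel_left₀ h hκ, if_pos hh]

theorem starter_mul_true_of_notMem (hκ : κ ≠ 0) {h : F} (hh : h ∉ H) :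
    starter ω κ H (κ * h, true) = (κ * (ω * h), true) := by
  rw [starter, mul_div_cancel_left₀ h hκ, if_neg hh, mul_left_comm]

theorem starter_false_of_neg_mem {h : F} (hh : -h ∈ H) :
    starter ω κ H (h, false) = (-(ω ^ 2 * κ * h), true) :=
  if_pos hh

theorem starter_false_of_neg_notMem {h : F} (hh : -h ∉ H) :
    starter ω κ H (h, false) = (-(ω * h), false) :=
  if_neg hh

theorem starter_zero (hH : IsHalfSystem ω H) (b : Bool) : starter ω κ H (0, b) = (0, b) := by
  cases b <;> simp [starter, hH.zero_notMem]

theorem starter_cube_mul_true (hH : IsHalfSystem ω H) (hω : ω ^ 3 = 1) (hκ : κ ≠ 0) (h : F) :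
    starter ω κ H (starter ω κ H (starter ω κ H (κ * h, true))) = (κ * h, true) := by
  have mul_notMem : ∀ {k}, k ∉ H → ω * k ∉ H := fun hk => (hH.mul_mem_iff _).not.2 hk
  by_cases hh : h ∈ H
  · have hωh : - -(ω * h) ∈ H := by rwa [neg_neg, hH.mul_mem_iff]
    rw [starter_mul_true_of_mem hκ hh, starter_false_of_neg_notMem (hH.neg_notMem hh),
      starter_false_of_neg_mem hωh]
    exact Prod.ext (by linear_combination κ * h * hω) rfl
  · rw [starter_mul_true_of_notMem hκ hh, starter_mul_true_of_notMem hκ (mul_notMem hh),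
      starter_mul_true_of_notMem hκ (mul_notMem (mul_notMem hh))]
    exact Prod.ext (by linear_combination κ * h * hω) rfl

theorem starter_cube (hH : IsHalfSystem ω H) (hω : ω ^ 3 = 1) (hκ : κ ≠ 0) (p : F × Bool) :
    starter ω κ H (starter ω κ H (starter ω κ H p)) = p := by
  have cube_mul := starter_cube_mul_true hH hω hκ
  obtain ⟨d, _ | _⟩ := p
  · by_cases hd : -d ∈ H
    · have hωd : -(ω ^ 2 * d) ∈ H := by
        rwa [sq, mul_assoc, ← mul_neg, ← mul_neg, hH.mul_mem_iff, hH.mul_mem_iff]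
      have apply_d : starter ω κ H (d, false) = (κ * -(ω ^ 2 * d), true) := by
        rw [starter_false_of_neg_mem hd]
        exact Prod.ext (by ring) rfl
      rw [apply_d, starter_mul_true_of_mem hκ hωd,
        starter_false_of_neg_notMem (hH.neg_notMem hωd)]
      exact Prod.ext (by linear_combination d * hω) rfl
    · rcases eq_or_ne d 0 with rfl | h0
      · simp only [starter_zero hH]
      · rw [← starter_mul_true_of_mem hκ (hH.mem_of_neg_notMem h0 hd), cube_mul]
  · simpa [mul_div_cancel₀ _ hκ] using cube_mul (d / κ)

section Differences

variable (hH : IsHalfSystem ω H)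

include hH

theorem hasMixedDiff_starter_false_false (hω : ω ^ 2 + ω + 1 = 0) (d : F) :
    HasMixedDiff (starter ω κ H) false false d := by
  by_cases h : -(ω * d) ∈ H
  · refine Or.inr ⟨-(ω * d), ?_⟩
    rw [starter_false_of_neg_notMem (hH.neg_notMem h)]
    exact Prod.ext (by linear_combination d * hω) rfl
  · refine Or.inl ⟨ω * d, ?_⟩
    rw [starter_false_of_neg_notMem h]
    exact Prod.ext (by linear_combination -d * hω) rfl

theorem hasMixedDiff_starter_true_true (hκ : κ ≠ 0) (h1ω : ω ≠ 1) (d : F) :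
    HasMixedDiff (starter ω κ H) true true d := by
  obtain ⟨h, rfl⟩ : ∃ h, d = κ * (ω - 1) * h :=
    ⟨d / (κ * (ω - 1)), (mul_div_cancel₀ d (mul_ne_zero hκ (sub_ne_zero.2 h1ω))).symm⟩
  by_cases hh : h ∈ H
  · refine Or.inr ⟨κ * -h, ?_⟩
    rw [starter_mul_true_of_notMem hκ (hH.neg_notMem hh)]
    exact Prod.ext (by ring) rfl
  · refine Or.inl ⟨κ * h, ?_⟩
    rw [starter_mul_true_of_notMem hκ hh]
    exact Prod.ext (by ring) rfl

variable (hω : ω ^ 2 + ω + 1 = 0) (h2 : (2 : F) ≠ 0) (h2κ : 2 * κ = 1 - ω) (hκ : κ ≠ 0)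

include hω h2 h2κ hκ

theorem hasMixedDiff_starter_false_true {d : F} (hd : d ≠ 0) :
    HasMixedDiff (starter ω κ H) false true d := by
  by_cases h : -(2 * d) ∈ H
  · have hn : -(2 * ω ^ 2 * d) ∈ H := by
      rwa [show -(2 * ω ^ 2 * d) = ω * (ω * -(2 * d)) by ring, hH.mul_mem_iff, hH.mul_mem_iff]
    refine Or.inl ⟨2 * ω ^ 2 * d, ?_⟩
    rw [starter_false_of_neg_mem hn]
    refine Prod.ext ?_ rfl
    linear_combination (-ω ^ 4 * d) * h2κ + (ω ^ 3 - 2 * ω ^ 2 + ω - 1) * d * hω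
  · have hp : 2 * ω * d ∈ H := by
      rw [show 2 * ω * d = ω * (2 * d) by ring, hH.mul_mem_iff]
      exact hH.mem_of_neg_notMem (mul_ne_zero h2 hd) h
    refine Or.inr ⟨κ * (2 * ω * d), ?_⟩
    rw [starter_mul_true_of_mem hκ hp]
    exact Prod.ext (by linear_combination (-ω * d) * h2κ + d * hω) rfl

theorem hasMixedDiff_starter (b c : Bool) {d : F} (hd : d ≠ 0) :
    HasMixedDiff (starter ω κ H) b c d := by
  have h1ω : ω ≠ 1 := fun h => mul_ne_zero h2 hκ (by rw [h2κ, h, sub_self])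
  cases b <;> cases c
  · exact hasMixedDiff_starter_false_false hH hω d
  · exact hasMixedDiff_starter_false_true hH hω h2 h2κ hκ hd
  · rw [← hasMixedDiff_neg_iff]
    exact hasMixedDiff_starter_false_true hH hω h2 h2κ hκ (neg_ne_zero.2 hd)
  · exact hasMixedDiff_starter_true_true hH hκ h1ω d

end Differences

theorem exists_isHalfSystem [Finite F] (hω : ω ^ 3 = 1) (h2 : (2 : F) ≠ 0) :
    ∃ H : Set F, IsHalfSystem ω H := by
  obtain ⟨f, hf⟩ := Countable.exists_injective_nat F
  -- `m d` is the least label in the orbit of `d` under `ω`; of `h` and `-h`, the half system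
  -- contains the one with the smaller value.
  let m : F → ℕ := fun d => min (f d) (min (f (ω * d)) (f (ω * (ω * d))))
  have m_mul : ∀ d, m (ω * d) = m d := fun d => by
    have hd : ω * (ω * (ω * d)) = d := by linear_combination d * hω
    simp only [m, hd, min_comm, min_left_comm]
  have m_eq : ∀ d, ∃ a, a ^ 3 = d ^ 3 ∧ f a = m d := fun d => by
    have h₁ : (ω * d) ^ 3 = d ^ 3 := by linear_combination d ^ 3 * hω
    have h₂ : (ω * (ω * d)) ^ 3 = d ^ 3 := by linear_combination d ^ 3 * (ω ^ 3 + 1) * hω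
    rcases min_choice (f d) (min (f (ω * d)) (f (ω * (ω * d)))) with h | h
    · exact ⟨d, rfl, h.symm⟩
    · rcases min_choice (f (ω * d)) (f (ω * (ω * d))) with h' | h'
      · exact ⟨_, h₁, (h.trans h').symm⟩
      · exact ⟨_, h₂, (h.trans h').symm⟩
  have m_neg : ∀ d ≠ 0, m (-d) ≠ m d := fun d hd hm => by
    obtain ⟨a, ha, hfa⟩ := m_eq d
    obtain ⟨b, hb, hfb⟩ := m_eq (-d)
    obtain rfl := hf (hfa.trans (hm.symm.trans hfb.symm))
    exact mul_ne_zero h2 (pow_ne_zero 3 hd) (by linear_combination hb - ha)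
  refine ⟨{d | m d < m (-d)}, by simp, fun d => ?_, fun d hd => ?_⟩
  · simp only [Set.mem_ofPred_eq, ← mul_neg, m_mul]
  · rw [Set.mem_ofPred_eq, Set.mem_ofPred_eq, neg_neg, not_lt]
    exact ⟨le_of_lt, fun h => lt_of_le_of_ne h (m_neg d hd)⟩

end Starter

theorem hasFrame_card_field {F : Type*} [Field F] [Finite F] (h6 : Nat.card F % 6 = 1) :
    HasFrame (Nat.card F) := by
  have := Fintype.ofFinite F
  have h2 : (2 : F) ≠ 0 := Ring.two_ne_zero fun h => by
    have := FiniteField.even_card_of_char_two h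
    rw [← Nat.card_eq_fintype_card] at this
    lia
  obtain ⟨ω, hω⟩ := exists_prime_orderOf_dvd_card' (G := Fˣ) 3 (by rw [Nat.card_units]; lia)
  have hω3 : (ω : F) ^ 3 = 1 := by
    rw [← Units.val_pow_eq_pow_val, ← hω, pow_orderOf_eq_one, Units.val_one]
  have hω1 : 1 - (ω : F) ≠ 0 := fun h => by
    rw [sub_eq_zero, eq_comm, Units.val_eq_one] at h
    simp [h] at hω
  have hω2 : (ω : F) ^ 2 + ω + 1 = 0 :=
    mul_left_cancel₀ hω1 (by linear_combination -hω3)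
  have hκ := div_ne_zero hω1 h2
  obtain ⟨H, hH⟩ := exists_isHalfSystem hω3 h2
  exact hasFrame_of_hasMixedDiff _ (starter_zero hH) (starter_cube hH hω3 hκ)
    fun b c _ => hasMixedDiff_starter hH hω2 h2 (mul_div_cancel₀ _ h2) hκ b c

theorem hasFrame_of_isPrimePow {q : ℕ} (hq : IsPrimePow q) (h6 : q % 6 = 1) : HasFrame q := by
  obtain ⟨_⟩ : Nonempty (Field (Fin q)) := Fintype.nonempty_field_iff.2 (by simpa using hq)
  simpa using hasFrame_card_field (F := Fin q) (by simpa using h6)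

/-! ### Small frames -/

namespace IsKirkman

variable {C P Q : Type*}

theorem transport {σ : C → P → P} (h : IsKirkman σ) (e : P ≃ Q) :
    IsKirkman fun x q => e (σ x (e.symm q)) where
  card_eq := by rw [← h.card_eq, Nat.card_congr e]
  cube x q := by simp [h.cube]
  cover p q hpq := by
    obtain ⟨x, hx⟩ := h.cover _ _ (e.symm.injective.ne hpq)
    exact ⟨x, hx.imp (fun hx => by simp [hx]) fun hx => by simp [hx]⟩

/-- The steps between consecutive levels of the triple `{(p, 0), (p + 1, 1), (p + 2, 2)}`. -/
def levelStep (R : Type*) [CommRing R] : ZMod 3 → R :=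
  ![1, 1, -2]

/-- The classes of a Kirkman triple system on `R × ZMod 3`: a class of a system on `R` is copied
on each level, and the further class `z` consists of the transversals
`{(p, 0), (p + z, 1), (p + 2 z, 2)}`. -/
def tripling {R : Type*} [CommRing R] (σ : C → R → R) : C ⊕ R → R × ZMod 3 → R × ZMod 3
  | Sum.inl x, (p, i) => (σ x p, i)
  | Sum.inr z, (p, i) => (p + levelStep R i * z, i + 1)

theorem isUnit_levelStep {R : Type*} [CommRing R] (h2 : IsUnit (2 : R)) (i : ZMod 3) :
    IsUnit (levelStep R i) := by
  fin_cases i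
  exacts [isUnit_one, isUnit_one, h2.neg]

theorem levelStep_add_levelStep_add_levelStep {R : Type*} [CommRing R] (i : ZMod 3) :
    levelStep R i + levelStep R (i + 1) + levelStep R (i + 1 + 1) = 0 := by
  fin_cases i
  · change (1 : R) + 1 + -2 = 0
    ring
  · change (1 : R) + -2 + 1 = 0
    ring
  · change (-2 : R) + 1 + 1 = 0
    ring

theorem exists_tripling_inr_eq {R : Type*} [CommRing R] (σ : C → R → R) (h2 : IsUnit (2 : R))
    (p q : R) (i : ZMod 3) : ∃ z, tripling σ (Sum.inr z) (p, i) = (q, i + 1) := by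
  obtain ⟨u, hu⟩ := (isUnit_levelStep h2 i).exists_right_inv
  refine ⟨u * (q - p), Prod.ext ?_ rfl⟩
  simp only [tripling]
  linear_combination (q - p) * hu

theorem isKirkman_tripling {R : Type*} [CommRing R] [Finite C] {σ : C → R → R} (h : IsKirkman σ)
    (h2 : IsUnit (2 : R)) : IsKirkman (tripling σ) where
  card_eq := by
    have := h.finite_points
    rw [Nat.card_prod, Nat.card_sum, h.card_eq, Nat.card_zmod]
    lia
  cube := by
    have add_three : ∀ i : ZMod 3, i + 1 + 1 + 1 = i := by decide
    rintro (x | z) ⟨p, i⟩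
    · simp only [tripling, h.cube]
    · refine Prod.ext ?_ (add_three i)
      simp only [tripling]
      linear_combination z * levelStep_add_levelStep_add_levelStep (R := R) i
  cover := by
    have cases_level : ∀ i j : ZMod 3, i = j ∨ j = i + 1 ∨ i = j + 1 := by decide
    rintro ⟨p, i⟩ ⟨q, j⟩ hpq
    obtain rfl | rfl | rfl := cases_level i j
    · obtain ⟨x, hx⟩ := h.cover p q fun hpq' => hpq (by rw [hpq'])
      exact ⟨Sum.inl x, hx.imp (congrArg (·, i)) (congrArg (·, i))⟩
    · obtain ⟨z, hz⟩ := exists_tripling_inr_eq σ h2 p q i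
      exact ⟨_, Or.inl hz⟩
    · obtain ⟨z, hz⟩ := exists_tripling_inr_eq σ h2 q p j
      exact ⟨_, Or.inr hz⟩

end IsKirkman

theorem HasFrame.exists_isKirkman {r : ℕ} (h : HasFrame r) {P : Type*}
    (hP : Nat.card P = 2 * r + 1) : ∃ σ : Fin r → P → P, IsKirkman σ := by
  obtain ⟨σ, hσ⟩ := hasFrame_card_iff.1 (by rwa [Nat.card_fin] : HasFrame (Nat.card (Fin r)))
  have : Finite P := Nat.finite_of_card_ne_zero (by simp [hP])
  obtain ⟨e⟩ : Nonempty (Option (Fin r × Bool) ≃ P) :=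
    Finite.card_eq.1 (by rw [hσ.isKirkman_addPoint.card_eq, Nat.card_fin, hP])
  exact ⟨_, hσ.isKirkman_addPoint.transport e⟩

theorem HasFrame.three_mul_add_one {r : ℕ} (h : HasFrame r) : HasFrame (3 * r + 1) := by
  obtain ⟨σ, hσ⟩ := h.exists_isKirkman (P := ZMod (2 * r + 1)) (Nat.card_zmod _)
  have h2 : IsUnit (2 : ZMod (2 * r + 1)) := by
    exact_mod_cast (ZMod.isUnit_iff_coprime 2 (2 * r + 1)).2 (by simp)
  convert (hσ.isKirkman_tripling h2).hasFrame using 1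
  rw [Nat.card_sum, Nat.card_fin, Nat.card_zmod]
  ring

theorem hasFrame_zero : HasFrame 0 :=
  ⟨fun _ => id, by simpa using IsFrameOn.empty _⟩

theorem hasFrame_four : HasFrame 4 :=
  hasFrame_zero.three_mul_add_one.three_mul_add_one

/-- The classes of a Kirkman triple system on `ZMod 7 × ZMod 3`. The class `z : ZMod 7` consists of
`{z} × ZMod 3`, the triple `z + {1, 2, 4}` on each level, and three transversals of
`z + {3, 5, 6}`. The class `a : Fin 3` consists of the transversals
`{(x, 0), (x + 2 ^ a, 1), (x + 3 * 2 ^ a, 2)}`. -/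
def kirkmanTwentyOne : ZMod 7 ⊕ Fin 3 → ZMod 7 × ZMod 3 → ZMod 7 × ZMod 3
  | Sum.inl z, (x, i) =>
    if x = z then (x, i + 1)
    else if x - z ∈ ({1, 2, 4} : Finset (ZMod 7)) then (z + 2 * (x - z), i)
    else (z + 2 * (x - z), i + 1)
  | Sum.inr a, (x, i) => (x + 2 ^ (a : ℕ) * 2 ^ i.val, i + 1)

theorem isKirkman_kirkmanTwentyOne : IsKirkman kirkmanTwentyOne where
  card_eq := by simp
  cube := by decide +kernel
  cover := by decide +kernel

theorem hasFrame_ten : HasFrame 10 := by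
  simpa using isKirkman_kirkmanTwentyOne.hasFrame

theorem hasFrame_seven : HasFrame 7 :=
  hasFrame_of_isPrimePow Nat.prime_seven.isPrimePow rfl

theorem hasFrame_card_add_card {G K ι : Type*} [AddCommGroup G] [Finite G] [Finite ι] {D : K → G}
    (inj : Function.Injective D) {N : ι → AddSubgroup G}
    (diff : ∀ d ≠ 0, ∃! x : (K × K) ⊕ ι,
      x.elim (fun k => D k.1 - D k.2 = d) (fun i => d ∈ N i))
    (hK : HasFrame (Nat.card K)) (hN : ∀ i, HasFrame (Nat.card (N i) + 1))
    (hι : HasFrame (Nat.card ι)) : HasFrame (Nat.card G + Nat.card ι) := by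
  rw [← Nat.card_sum, ← Set.ncard_univ]
  refine (isGDDOn_completedBlocks diff).hasFrame_ncard ?_
  rintro _ ((⟨c, rfl⟩ | ⟨⟨a, i⟩, rfl⟩) | rfl)
  · have translate_injective : Function.Injective fun k => (Sum.inl (c + D k) : G ⊕ ι) :=
      Sum.inl_injective.comp ((add_right_injective c).comp inj)
    rwa [Set.ncard_range_of_injective translate_injective]
  · rw [ncard_extendedLine]
    exact hN i
  · rwa [Set.ncard_range_of_injective Sum.inr_injective]

/-- The directions of the seven lines of `𝔽₃³` that contain no difference of two of the points
`0, e₁, e₂, e₃`. -/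
def avoidedDirection : Fin 7 → ZMod 3 × ZMod 3 × ZMod 3 :=
  ![(0, 1, 1), (1, 0, 1), (1, 1, 0), (1, 1, 1), (1, 1, 2), (1, 2, 1), (1, 2, 2)]

theorem hasFrame_thirtyFour : HasFrame 34 := by
  let D : Fin 4 → ZMod 3 × ZMod 3 × ZMod 3 := ![0, (1, 0, 0), (0, 1, 0), (0, 0, 1)]
  have order (i : Fin 7) : addOrderOf (avoidedDirection i) = 3 :=
    addOrderOf_eq_prime (by revert i; decide) (by revert i; decide)
  have diff : ∀ d ≠ 0, ∃! x : (Fin 4 × Fin 4) ⊕ Fin 7, x.elim (fun k => D k.1 - D k.2 = d)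
      (fun i => d ∈ AddSubgroup.zmultiples (avoidedDirection i)) := by
    simp only [ExistsUnique, Sum.exists, Sum.forall, Sum.elim_inl, Sum.elim_inr,
      Sum.inl.injEq, Sum.inr.injEq, reduceCtorEq, mem_zmultiples_iff_mem_range_addOrderOf, order]
    set_option synthInstance.maxSize 256 in decide +kernel
  simpa using hasFrame_card_add_card (by decide) diff (by simpa using hasFrame_four)
    (fun i => by rw [Nat.card_zmultiples, order]; exact hasFrame_four)
    (by simpa using hasFrame_seven)

/-! ### Inflating by three -/

theorem IsGDDOn.exists_prod_of_ncard_eq {I V W : Type*} [Finite I] [Nonempty I]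
    {𝓑 : Set (Set (I × W))} (h : IsGDDOn Set.univ Prod.fst 𝓑) {k : ℕ}
    (hk : ∀ D ∈ 𝓑, D.ncard = k) {B : Set V} (hB : B.ncard = Nat.card I) :
    ∃ 𝓓 : Set (Set (V × W)), IsGDDOn (B ×ˢ Set.univ) Prod.fst 𝓓 ∧ ∀ D ∈ 𝓓, D.ncard = k := by
  have : Finite B := Set.finite_of_ncard_pos (hB ▸ Nat.card_pos)
  obtain ⟨e⟩ : Nonempty (I ≃ B) := Finite.card_eq.1 hB.symm
  let f : I × W → V × W := Prod.map (fun i => (e i : V)) id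
  have he : Function.Injective fun i => (e i : V) := Subtype.val_injective.comp e.injective
  have hf : Function.Injective f := he.prodMap Function.injective_id
  have image_univ : f '' Set.univ = B ×ˢ Set.univ := by
    rw [Set.image_univ, Set.range_prodMap, Set.range_id]
    exact congrArg (· ×ˢ Set.univ) ((e.surjective.range_comp _).trans Subtype.range_coe)
  refine ⟨Set.image f '' 𝓑, ?_, ?_⟩
  · rw [← image_univ]
    exact h.image hf.injOn fun _ _ _ _ => he.eq_iff
  · rintro _ ⟨D, hD, rfl⟩
    rw [Set.ncard_image_of_injective D hf, hk D hD]

theorem exists_isGDDOn_univ_prod {G H J K : Type*} [AddCommGroup G] [AddCommGroup H]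
    {D : J → K → G × H} (inj : ∀ j, Function.Injective (AddMonoidHom.fst G H ∘ D j))
    (diff : ∀ d, AddMonoidHom.fst G H d ≠ 0 →
      ∃! x : J × K × K, D x.1 x.2.1 - D x.1 x.2.2 = d) :
    ∃ 𝓑, IsGDDOn Set.univ (Prod.fst : G × H → G) 𝓑 ∧ ∀ B ∈ 𝓑, B.ncard = Nat.card K := by
  refine ⟨_, isGDDOn_range_translates _ inj diff, ?_⟩
  rintro _ ⟨⟨j, c⟩, rfl⟩
  exact Set.ncard_range_of_injective ((add_right_injective c).comp (inj j).of_comp)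

theorem exists_isGDDOn_three_pow_four :
    ∃ 𝓑, IsGDDOn Set.univ (Prod.fst : Option (ZMod 3) × ZMod 3 → Option (ZMod 3)) 𝓑 ∧
      ∀ B ∈ 𝓑, B.ncard = 4 := by
  have ha : ∀ i j : ZMod 3, i ≠ j → IsUnit (id i - id j) := by decide
  refine ⟨_, isGDDOn_graphOn (affineRow_existsUnique ha), ?_⟩
  rintro _ ⟨k, rfl⟩
  simp [Set.ncard_univ]

theorem exists_isGDDOn_three_pow_five :
    ∃ 𝓑, IsGDDOn Set.univ (Prod.fst : ZMod 5 × ZMod 3 → ZMod 5) 𝓑 ∧ ∀ B ∈ 𝓑, B.ncard = 4 := by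
  let D : Unit → Fin 4 → ZMod 5 × ZMod 3 := fun _ => ![(0, 0), (1, 1), (3, 0), (2, 1)]
  have inj : ∀ j, Function.Injective (AddMonoidHom.fst (ZMod 5) (ZMod 3) ∘ D j) := by decide
  have diff : ∀ d, AddMonoidHom.fst (ZMod 5) (ZMod 3) d ≠ 0 →
      ∃! x : Unit × Fin 4 × Fin 4, D x.1 x.2.1 - D x.1 x.2.2 = d := by
    unfold ExistsUnique
    decide
  simpa using exists_isGDDOn_univ_prod inj diff

theorem exists_isGDDOn_three_pow_nine :
    ∃ 𝓑, IsGDDOn Set.univ (Prod.fst : (ZMod 3 × ZMod 3) × ZMod 3 → ZMod 3 × ZMod 3) 𝓑 ∧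
      ∀ B ∈ 𝓑, B.ncard = 4 := by
  let D : Fin 2 → Fin 4 → (ZMod 3 × ZMod 3) × ZMod 3 :=
    ![![((0, 0), 0), ((0, 1), 0), ((1, 0), 0), ((1, 1), 1)],
      ![((0, 0), 0), ((0, 1), 2), ((1, 2), 1), ((2, 2), 0)]]
  have inj : ∀ j, Function.Injective (AddMonoidHom.fst (ZMod 3 × ZMod 3) (ZMod 3) ∘ D j) := by
    decide
  have diff : ∀ d, AddMonoidHom.fst (ZMod 3 × ZMod 3) (ZMod 3) d ≠ 0 →
      ∃! x : Fin 2 × Fin 4 × Fin 4, D x.1 x.2.1 - D x.1 x.2.2 = d := by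
    unfold ExistsUnique
    set_option synthInstance.maxSize 256 in decide +kernel
  simpa using exists_isGDDOn_univ_prod inj diff

theorem exists_isGDDOn_prod {V : Type*} {B : Set V} (hB : B.ncard = 4 ∨ B.ncard = 5) :
    ∃ 𝓓 : Set (Set (V × ZMod 3)),
      IsGDDOn (B ×ˢ Set.univ) Prod.fst 𝓓 ∧ ∀ D ∈ 𝓓, D.ncard = 4 := by
  rcases hB with hB | hB
  · obtain ⟨𝓑, h, h4⟩ := exists_isGDDOn_three_pow_four
    exact h.exists_prod_of_ncard_eq h4 (by simpa)
  · obtain ⟨𝓑, h, h4⟩ := exists_isGDDOn_three_pow_five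
    exact h.exists_prod_of_ncard_eq h4 (by simpa)

theorem IsGDDOn.hasFrame_three_mul_ncard_add_one {V ι : Type*} [Finite V] {s : Set V} {g : V → ι}
    {𝓑 : Set (Set V)} (h : IsGDDOn s g 𝓑) (h𝓑 : ∀ B ∈ 𝓑, B.ncard = 4 ∨ B.ncard = 5)
    (hg : ∀ i, HasFrame (3 * (s ∩ g ⁻¹' {i}).ncard + 1)) : HasFrame (3 * s.ncard + 1) := by
  choose! 𝓓 hGDD h𝓓 using fun B hB => exists_isGDDOn_prod (h𝓑 B hB)
  have ncard_prod : ∀ t : Set V, (t ×ˢ (Set.univ : Set (ZMod 3))).ncard = 3 * t.ncard :=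
    fun t => by simp [Set.ncard_prod, Set.ncard_univ, mul_comm]
  rw [← ncard_prod]
  refine (h.inflate hGDD).hasFrame_ncard_add_one (fun D hD => ?_) fun i => ?_
  · obtain ⟨B, hB, hDB⟩ := Set.mem_iUnion₂.1 hD
    rw [h𝓓 B hB D hDB]
    exact hasFrame_four
  · convert hg i using 2
    rw [← ncard_prod]
    congr 1
    ext
    simp

theorem ncard_preimage_fst_singleton {G H : Type*} (a : G) :
    (Set.univ ∩ (Prod.fst : G × H → G) ⁻¹' {a}).ncard = Nat.card H := by
  have fiber : Set.univ ∩ (Prod.fst : G × H → G) ⁻¹' {a} = {a} ×ˢ Set.univ := by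
    rw [Set.univ_inter, Set.prod_univ]
  rw [fiber, Set.ncard_prod, Set.ncard_singleton, Set.ncard_univ, one_mul]

theorem hasFrame_twentyEight : HasFrame 28 := by
  obtain ⟨𝓑, h, h4⟩ := exists_isGDDOn_three_pow_nine
  simpa [Set.ncard_univ] using h.hasFrame_ncard_add_one (fun B hB => h4 B hB ▸ hasFrame_four)
    fun a => by rw [ncard_preimage_fst_singleton, Nat.card_zmod]; exact hasFrame_four

theorem hasFrame_fortySix : HasFrame 46 := by
  obtain ⟨𝓑, h, h4⟩ := exists_isGDDOn_three_pow_five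
  simpa [Set.ncard_univ] using h.hasFrame_three_mul_ncard_add_one (fun B hB => Or.inl (h4 B hB))
    fun a => by rw [ncard_preimage_fst_singleton, Nat.card_zmod]; exact hasFrame_ten

theorem hasFrame_eightyTwo : HasFrame 82 := by
  obtain ⟨𝓑, h, h4⟩ := exists_isGDDOn_three_pow_nine
  simpa [Set.ncard_univ] using h.hasFrame_three_mul_ncard_add_one (fun B hB => Or.inl (h4 B hB))
    fun a => by rw [ncard_preimage_fst_singleton, Nat.card_zmod]; exact hasFrame_ten

section Truncation

variable {I R : Type*}

/-- The points of a transversal design with the groups `{i} × R`, `i : Option I`, whose group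
`{none} × R` has been cut down to `{none} × T`. -/
def truncation (I : Type*) (T : Set R) : Set (Option I × R) :=
  Set.range some ×ˢ Set.univ ∪ {none} ×ˢ T

theorem ncard_truncation [Finite I] [Finite R] (T : Set R) :
    (truncation I T).ncard = Nat.card I * Nat.card R + T.ncard := by
  rw [truncation, Set.ncard_union_eq (by simp [Set.disjoint_prod]), Set.ncard_prod, Set.ncard_prod,
    Set.ncard_range_of_injective (Option.some_injective I), Set.ncard_univ, Set.ncard_singleton,
    one_mul]

theorem ncard_truncation_inter_none (T : Set R) :
    (truncation I T ∩ Prod.fst ⁻¹' {none}).ncard = T.ncard := by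
  rw [← Set.ncard_image_of_injective T (Prod.mk_right_injective (none : Option I))]
  congr 1
  ext ⟨_ | i, x⟩ <;> simp [truncation]

theorem ncard_truncation_inter_some (T : Set R) (i : I) :
    (truncation I T ∩ Prod.fst ⁻¹' {some i}).ncard = Nat.card R := by
  rw [← Set.ncard_univ, ← Set.ncard_image_of_injective Set.univ (Prod.mk_right_injective (some i))]
  congr 1
  ext ⟨_ | j, x⟩ <;> simp [truncation, eq_comm]

theorem ncard_graphOn_inter_truncation [Finite I] (L : Option I → R) (T : Set R) :
    (Set.univ.graphOn L ∩ truncation I T).ncard = Nat.card I ∨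
      (Set.univ.graphOn L ∩ truncation I T).ncard = Nat.card I + 1 := by
  by_cases hL : L none ∈ T
  · have full : Set.univ.graphOn L ⊆ truncation I T := by
      rintro _ ⟨_ | i, -, rfl⟩
      · exact Or.inr ⟨rfl, hL⟩
      · exact Or.inl ⟨⟨i, rfl⟩, trivial⟩
    exact Or.inr (by
      rw [Set.inter_eq_left.2 full, Set.ncard_graphOn, Set.ncard_univ, Finite.card_option])
  · have cut : Set.univ.graphOn L ∩ truncation I T = (Set.range some).graphOn L := by
      refine subset_antisymm ?_ ?_
      · rintro _ ⟨⟨_ | i, -, rfl⟩, hT⟩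
        · simp [truncation, hL] at hT
        · exact ⟨some i, ⟨i, rfl⟩, rfl⟩
      · rintro _ ⟨_, ⟨i, rfl⟩, rfl⟩
        exact ⟨⟨some i, trivial, rfl⟩, Or.inl ⟨⟨i, rfl⟩, trivial⟩⟩
    exact Or.inl (by
      rw [cut, Set.ncard_graphOn, Set.ncard_range_of_injective (Option.some_injective I)])

end Truncation

theorem hasFrame_of_isUnit_sub {R : Type*} [CommRing R] [Finite R] {a : Fin 4 → R}
    (ha : ∀ i j, i ≠ j → IsUnit (a i - a j)) {h : ℕ} (h_le : h ≤ Nat.card R)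
    (hR : HasFrame (3 * Nat.card R + 1)) (hh : HasFrame (3 * h + 1)) :
    HasFrame (3 * (4 * Nat.card R + h) + 1) := by
  obtain ⟨T, -, rfl⟩ := Set.exists_subset_card_eq (s := (Set.univ : Set R))
    (h_le.trans_eq (Set.ncard_univ R).symm)
  have design := (isGDDOn_graphOn (affineRow_existsUnique ha)).inter (truncation _ T)
  rw [Set.univ_inter] at design
  rw [← Nat.card_fin 4, ← ncard_truncation]
  refine design.hasFrame_three_mul_ncard_add_one ?_ ?_
  · rintro _ ⟨_, ⟨k, rfl⟩, rfl⟩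
    simpa using ncard_graphOn_inter_truncation (affineRow a k) T
  · rintro (_ | i)
    · rwa [ncard_truncation_inter_none]
    · rwa [ncard_truncation_inter_some]

theorem hasFrame_of_four_le_card {F : Type*} [Field F] [Finite F] (h4 : 4 ≤ Nat.card F) {h : ℕ}
    (h_le : h ≤ Nat.card F) (hF : HasFrame (3 * Nat.card F + 1)) (hh : HasFrame (3 * h + 1)) :
    HasFrame (3 * (4 * Nat.card F + h) + 1) := by
  have := Fintype.ofFinite F
  obtain ⟨a⟩ : Nonempty (Fin 4 ↪ F) := Function.Embedding.nonempty_of_card_le (by simpa using h4)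
  exact hasFrame_of_isUnit_sub (fun i j hij => (sub_ne_zero.2 (a.injective.ne hij)).isUnit)
    h_le hF hh

theorem hasFrame_of_isPrimePow_of_le {m h : ℕ} (hm : IsPrimePow m) (h4 : 4 ≤ m) (h_le : h ≤ m)
    (hfm : HasFrame (3 * m + 1)) (hh : HasFrame (3 * h + 1)) :
    HasFrame (3 * (4 * m + h) + 1) := by
  obtain ⟨_⟩ : Nonempty (Field (Fin m)) := Fintype.nonempty_field_iff.2 (by simpa using hm)
  simpa using hasFrame_of_four_le_card (F := Fin m) (by simpa) (by simpa) (by simpa) hh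

theorem isUnit_natCast_sub_natCast {m : ℕ} (hm : m.Coprime 6) {i j : Fin 4} (hij : i ≠ j) :
    IsUnit ((i : ℕ) - (j : ℕ) : ZMod m) := by
  have dvd_six : ∀ i j : Fin 4, i < j → (j - i : ℕ) ∣ 6 := by decide
  have isUnit_of_lt {i j : Fin 4} (h : i < j) : IsUnit ((j : ℕ) - (i : ℕ) : ZMod m) := by
    rw [← Nat.cast_sub h.le, ZMod.isUnit_iff_coprime]
    exact hm.symm.coprime_dvd_left (dvd_six i j h)
  rcases lt_or_gt_of_ne hij with h | h
  · exact IsUnit.sub_iff.1 (isUnit_of_lt h)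
  · exact isUnit_of_lt h

theorem hasFrame_of_coprime_of_le {m h : ℕ} (hm : m.Coprime 6) (h_le : h ≤ m)
    (hfm : HasFrame (3 * m + 1)) (hh : HasFrame (3 * h + 1)) :
    HasFrame (3 * (4 * m + h) + 1) := by
  have : NeZero m := ⟨by rintro rfl; simp at hm⟩
  simpa using hasFrame_of_isUnit_sub (fun i j => isUnit_natCast_sub_natCast hm)
    (by simpa) (by simpa) hh

theorem hasFrame_three_mul_add_one_of_lt {u : ℕ} (hu : u < 16) : HasFrame (3 * u + 1) := by
  have prime {p : ℕ} (hp : p.Prime) (h6 : p % 6 = 1) : HasFrame p :=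
    hasFrame_of_isPrimePow hp.isPrimePow h6
  interval_cases u
  · exact hasFrame_zero.three_mul_add_one
  · exact hasFrame_four
  · exact hasFrame_seven
  · exact hasFrame_ten
  · exact hasFrame_four.three_mul_add_one
  · exact hasFrame_of_coprime_of_le (m := 1) (h := 1) (by norm_num) le_rfl hasFrame_four
      hasFrame_four
  · exact prime (by norm_num) rfl
  · exact hasFrame_seven.three_mul_add_one
  · exact hasFrame_of_isPrimePow (Nat.prime_five.isPrimePow.pow two_ne_zero) rfl
  · exact hasFrame_twentyEight
  · exact prime (by norm_num) rfl
  · exact hasFrame_thirtyFour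
  · exact prime (by norm_num) rfl
  · exact hasFrame_four.three_mul_add_one.three_mul_add_one
  · exact prime (by norm_num) rfl
  · exact hasFrame_fortySix

theorem hasFrame_four_mul_add {m h : ℕ} (hm : m.Coprime 6 ∨ IsPrimePow m ∧ 4 ≤ m) (h_le : h ≤ m)
    (hfm : HasFrame (3 * m + 1)) (hh : HasFrame (3 * h + 1)) :
    HasFrame (3 * (4 * m + h) + 1) := by
  rcases hm with hm | ⟨hm, h4⟩
  · exact hasFrame_of_coprime_of_le hm h_le hfm hh
  · exact hasFrame_of_isPrimePow_of_le hm h4 h_le hfm hh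

theorem coprime_six_of_mod {m : ℕ} (h : m % 6 = 1 ∨ m % 6 = 5) : m.Coprime 6 := by
  rw [← ZMod.coprime_mod_iff_coprime]
  rcases h with h | h <;> rw [h] <;> decide

/-- One takes for `m` the largest integer coprime to six with `4 * m ≤ u`; in the ranges `16 … 19`,
`36 … 43` and `66, 67`, where it is less than `u / 5`, there is a prime power instead. -/
theorem exists_eq_four_mul_add {u : ℕ} (hu : 16 ≤ u) (h26 : u ≠ 26) (h27 : u ≠ 27) :
    ∃ m h, u = 4 * m + h ∧ h ≤ m ∧ (m.Coprime 6 ∨ IsPrimePow m ∧ 4 ≤ m) := by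
  suffices ∃ m, 4 * m ≤ u ∧ u ≤ 5 * m ∧ (m.Coprime 6 ∨ IsPrimePow m ∧ 4 ≤ m) by
    obtain ⟨m, h_le, h_ge, hm⟩ := this
    exact ⟨m, u - 4 * m, by omega, by omega, hm⟩
  have coprime (h₁ : 20 ≤ u) (h₂ : u < 36 ∨ 44 ≤ u) (h₃ : u < 66 ∨ 68 ≤ u) :
      ∃ m, 4 * m ≤ u ∧ u ≤ 5 * m ∧ (m % 6 = 1 ∨ m % 6 = 5) := by
    obtain h | h | h : u % 24 < 4 ∨ 4 ≤ u % 24 ∧ u % 24 < 20 ∨ 20 ≤ u % 24 := by omega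
    · exact ⟨6 * (u / 24) - 1, by omega, by omega, by omega⟩
    · exact ⟨6 * (u / 24) + 1, by omega, by omega, by omega⟩
    · exact ⟨6 * (u / 24) + 5, by omega, by omega, by omega⟩
  obtain h | h | h | ⟨h₁, h₂, h₃⟩ : u < 20 ∨ 36 ≤ u ∧ u < 44 ∨ 66 ≤ u ∧ u < 68 ∨
      20 ≤ u ∧ (u < 36 ∨ 44 ≤ u) ∧ (u < 66 ∨ 68 ≤ u) := by omega
  · exact ⟨2 ^ 2, by omega, by omega, .inr ⟨Nat.prime_two.isPrimePow.pow (by simp), by simp⟩⟩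
  · exact ⟨3 ^ 2, by omega, by omega, .inr ⟨Nat.prime_three.isPrimePow.pow (by simp), by simp⟩⟩
  · exact ⟨2 ^ 4, by omega, by omega, .inr ⟨Nat.prime_two.isPrimePow.pow (by simp), by simp⟩⟩
  · obtain ⟨m, h_le, h_ge, hm⟩ := coprime h₁ h₂ h₃
    exact ⟨m, h_le, h_ge, .inl (coprime_six_of_mod hm)⟩

theorem hasFrame_three_mul_add_one (u : ℕ) : HasFrame (3 * u + 1) := by
  induction u using Nat.strong_induction_on with
  | _ u ih =>
    obtain hu | hu := lt_or_ge u 16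
    · exact hasFrame_three_mul_add_one_of_lt hu
    obtain rfl | h26 := eq_or_ne u 26
    · exact hasFrame_of_isPrimePow (Nat.Prime.isPrimePow (by norm_num)) rfl
    obtain rfl | h27 := eq_or_ne u 27
    · exact hasFrame_eightyTwo
    obtain ⟨m, h, rfl, h_le, hm⟩ := exists_eq_four_mul_add hu h26 h27
    exact hasFrame_four_mul_add hm h_le (ih m (by omega)) (ih h (by omega))

/-! ### Blowing up a Kirkman triple system -/

section Factors

variable {V W : Type*} {H : SimpleGraph W} {F : SimpleGraph V}

/-- `φ` is an isomorphism from `H` onto an induced subgraph of `F` that no edge of `F` leaves. -/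
structure IsClosedCopy (H : SimpleGraph W) (F : SimpleGraph V) (φ : W → V) : Prop where
  injective : Function.Injective φ
  adj_iff : ∀ a b, F.Adj (φ a) (φ b) ↔ H.Adj a b
  mem_range_of_adj : ∀ a v, F.Adj (φ a) v → v ∈ Set.range φ

theorem IsHFactor.exists_isClosedCopy (h : IsHFactor H F) (v : V) :
    ∃ φ : W → V, IsClosedCopy H F φ ∧ v ∈ Set.range φ := by
  obtain ⟨ψ⟩ := h (F.connectedComponentMk v)
  have mem_range {u : V} (hu : F.Reachable u v) : u ∈ Set.range fun a => (ψ.symm a : V) :=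
    ⟨ψ ⟨u, ConnectedComponent.sound hu⟩, by simp⟩
  refine ⟨_, ⟨Subtype.val_injective.comp ψ.symm.injective, fun a b => ψ.symm.map_adj_iff,
    fun a u hau => mem_range ?_⟩, mem_range .rfl⟩
  exact hau.symm.reachable.trans (ConnectedComponent.exact (ψ.symm a).2)

theorem isHFactor_of_forall_exists_isClosedCopy (hH : H.Preconnected)
    (h : ∀ v, ∃ φ : W → V, IsClosedCopy H F φ ∧ v ∈ Set.range φ) : IsHFactor H F := by
  intro c
  induction c using ConnectedComponent.ind with
  | _ v =>
    obtain ⟨φ, hφ, w, rfl⟩ := h v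
    have mem_range {x y : V} (p : F.Walk x y) (hx : x ∈ Set.range φ) : y ∈ Set.range φ := by
      induction p with
      | nil => exact hx
      | cons hadj _ ih =>
        obtain ⟨a, rfl⟩ := hx
        exact ih (hφ.mem_range_of_adj a _ hadj)
    have supp_eq : (F.connectedComponentMk (φ w)).supp = Set.range φ := by
      ext y
      rw [ConnectedComponent.mem_supp_iff, ConnectedComponent.eq]
      constructor
      · rintro ⟨p⟩
        exact mem_range p.reverse ⟨w, rfl⟩
      · rintro ⟨a, rfl⟩
        exact (hH a w).map ⟨φ, (hφ.adj_iff _ _).2⟩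
    rw [supp_eq]
    exact ⟨Iso.symm ⟨Equiv.ofInjective φ hφ.injective, hφ.adj_iff _ _⟩⟩

theorem IsHFactor.comap_fst {U X : Type*} (h : IsHFactor H F)
    (hH : (H.comap (Prod.snd : X × W → W)).Preconnected) (e : U ≃ V × X) :
    IsHFactor (H.comap (Prod.snd : X × W → W)) (F.comap (Prod.fst ∘ e)) := by
  refine isHFactor_of_forall_exists_isClosedCopy hH fun u => ?_
  obtain ⟨φ, hφ, hu⟩ := h.exists_isClosedCopy (e u).1
  have mem_range (y : U) (hy : (e y).1 ∈ Set.range φ) :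
      y ∈ Set.range fun a : X × W => e.symm (φ a.2, a.1) := by
    obtain ⟨z, hz⟩ := hy
    exact ⟨((e y).2, z), by simp [hz]⟩
  refine ⟨_, ⟨fun a b hab => ?_, fun a b => ?_, fun a y hay => mem_range y ?_⟩, mem_range u hu⟩
  · simpa [hφ.injective.eq_iff, Prod.ext_iff, and_comm] using hab
  · simp [hφ.adj_iff]
  · exact hφ.mem_range_of_adj a.2 _ (by simpa using hay)

theorem isHFactor_compl_comap_fst {U X : Type*} (e : U ≃ V × X) :
    IsHFactor (⊤ : SimpleGraph X) ((⊤ : SimpleGraph V).comap (Prod.fst ∘ e))ᶜ := by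
  refine isHFactor_of_forall_exists_isClosedCopy preconnected_top fun u =>
    ⟨fun a => e.symm ((e u).1, a), ⟨fun a b hab => ?_, fun a b => ?_, fun a y hay => ?_⟩,
      (e u).2, by simp⟩
  · simpa using hab
  · simp
  · exact ⟨(e y).2, by simp_all [Equiv.symm_apply_eq, Prod.ext_iff]⟩

end Factors

theorem preconnected_comap_snd_top (W : Type*) :
    ((⊤ : SimpleGraph (ZMod 3)).comap (Prod.snd : W × ZMod 3 → ZMod 3)).Preconnected := by
  rintro ⟨a, i⟩ ⟨b, j⟩
  obtain ⟨k, hik, hkj⟩ : ∃ k, i ≠ k ∧ k ≠ j := by decide +revert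
  exact .trans (v := (a, k)) (Adj.reachable hik) (Adj.reachable hkj)

namespace IsKirkman

variable {C P V W : Type*} {σ : C → P → P}

/-- The graph of the triples of the class `x`. -/
def classGraph (σ : C → P → P) (x : C) : SimpleGraph P :=
  SimpleGraph.fromRel fun p q => σ x p = q

theorem classGraph_adj [Finite C] (h : IsKirkman σ) {x : C} {p q : P} :
    (classGraph σ x).Adj p q ↔ σ x p = q ∨ σ x q = p := by
  refine fromRel_adj .. |>.trans (and_iff_right_of_imp ?_)
  rintro (h' | h') rfl
  · exact h.apply_ne x p h'
  · exact h.apply_ne x p h'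

theorem isHFactor_classGraph [Finite C] (h : IsKirkman σ) (x : C) :
    IsHFactor (⊤ : SimpleGraph (ZMod 3)) (classGraph σ x) := by
  refine isHFactor_of_forall_exists_isClosedCopy preconnected_top fun p => ?_
  let k : ZMod 3 → P := ![p, σ x p, σ x (σ x p)]
  have σ_k : ∀ i, σ x (k i) = k (i + 1) := by
    intro i
    fin_cases i
    exacts [rfl, rfl, h.cube x p]
  have ne_iff : ∀ i j : ZMod 3, i ≠ j ↔ i + 1 = j ∨ j + 1 = i := by decide
  have k_injective : Function.Injective k := by
    intro i j hij
    by_contra hne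
    obtain rfl | rfl := (ne_iff i j).1 hne
    · exact h.apply_ne x (k i) ((σ_k i).trans hij.symm)
    · exact h.apply_ne x (k j) ((σ_k j).trans hij)
  refine ⟨k, ⟨k_injective, fun i j => ?_, fun i q hq => ?_⟩, 0, rfl⟩
  · rw [h.classGraph_adj, σ_k, σ_k, k_injective.eq_iff, k_injective.eq_iff, top_adj, ne_iff]
  · obtain hq | hq := h.classGraph_adj.1 hq
    · exact ⟨i + 1, (σ_k i).symm.trans hq⟩
    · exact ⟨i + 1 + 1, by rw [← σ_k, ← σ_k, ← hq, h.cube]⟩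

theorem isFactorDecomp {a : ℕ} {σ : Fin a → P → P} (h : IsKirkman σ) (e : V ≃ P × W) :
    IsFactorDecomp (⊤ : SimpleGraph V)
      ((⊤ : SimpleGraph (ZMod 3)).comap (Prod.snd : W × ZMod 3 → ZMod 3))
      (⊤ : SimpleGraph W) a 1 := by
  refine ⟨Sum.elim (fun x => (classGraph σ x).comap (Prod.fst ∘ e))
    fun _ => ((⊤ : SimpleGraph P).comap (Prod.fst ∘ e))ᶜ, fun _ => le_top, ?_,
    fun x => (h.isHFactor_classGraph x).comap_fst (preconnected_comap_snd_top W) e,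
    fun _ => isHFactor_compl_comap_fst e⟩
  rintro ⟨u, v⟩ huv
  by_cases hfst : (e u).1 = (e v).1
  · refine ⟨.inr 0, by simpa [hfst] using huv, ?_⟩
    rintro (x | j) hx
    · simp [hfst] at hx
    · rw [Subsingleton.elim j]
  · obtain ⟨x, hx⟩ := h.cover _ _ hfst
    refine ⟨.inl x, h.classGraph_adj.2 hx, ?_⟩
    rintro (y | j) hy
    · rw [h.class_unique (h.classGraph_adj.1 hy) hx]
    · simp [hfst] at hy

end IsKirkman

theorem Kn_K777_K7_decomp_general {V W : Type*} (t : ℕ) (e : V ≃ Fin (6 * t + 3) × W) :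
    IsFactorDecomp (⊤ : SimpleGraph V)
      ((⊤ : SimpleGraph (ZMod 3)).comap (Prod.snd : W × ZMod 3 → ZMod 3))
      (⊤ : SimpleGraph W) (3 * t + 1) 1 := by
  obtain ⟨σ, h⟩ := (hasFrame_three_mul_add_one t).exists_isKirkman (P := Fin (6 * t + 3))
    (by simp; ring)
  exact h.isFactorDecomp e

/-- For `n = 42t + 21` with `t ≥ 0`, `(K_n; K_{7,7,7}^{3t+1}, K₇)` exists, i.e. the edge
set of `K_n` can be partitioned into `3t+1` `K_{7,7,7}`-factors and one `K₇`-factor. -/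
theorem Kn_K777_K7_decomp (t : ℕ) :
    IsFactorDecomp (⊤ : SimpleGraph (Fin (42 * t + 21))) K777
      (⊤ : SimpleGraph (Fin 7)) (3 * t + 1) 1 :=
  Kn_K777_K7_decomp_general t ((finCongr (by ring)).trans finProdFinEquiv.symm)
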